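/- arXiv:2201.10404 — 4 statements merged into one kernel-verified Lean document; each statement's English description precedes it below -/
import Mathlib

section
/- Let E be a finite set of size m and let r : 2^E → ℤ≥0 be a function satisfying r(S) ≤ min(r(E), |S|) for every S ⊆ E; write r = r(E). Define the Tutte polynomial T_M(x,y) = ∑_{S ⊆ E} (x-1)^{r(E)-r(S)} (y-1)^{|S|-r(S)} and write T_M(x,y) = ∑_{i,j} t_{ij} x^i y^j. Then for every integer h ≥ 0: if h ≥ m then ∑_{i=0}^{h} ∑_{j=0}^{h-i} binom(h-i, j) (-1)^j t_{ij} = (-1)^{m-r} binom(h-r, h-m), and if h < m then ∑_{i=0}^{h} ∑_{j=0}^{h-i} binom(h-i, j) (-1)^j t_{ij} = 0. -/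
/-! The alternating sum indexed by `h` is the coefficient of `z ^ h` in `G * T(z, -z G)`, where
`G = 1 / (1 - z)` in `ℤ⟦z⟧`: on the monomial `x ^ i * y ^ j` both sides are
`(-1) ^ j * (h - i).choose j` if `i + j ≤ h` and `0` otherwise (`coeff_tutteSubst`). Under this substitution `x - 1` becomes
`-(1 - z)` and `y - 1` becomes `-G`, so the term of a subset `S` is
`(-1) ^ (r(E) + |S|) * (1 - z) ^ r(E) * G ^ |S|`: the value `r(S)` cancels
(`tutteSubst_term`). The sum over all `S` is then binomial,
`(1 - z) ^ r(E) * (-1) ^ r(E) * (1 - G) ^ m` with `1 - G = -z G`, whence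
`G * T(z, -z G) = (-1) ^ (m - r(E)) * z ^ m * G ^ (m - r(E) + 1)`, and the coefficients of powers
of `G` are binomial coefficients.
-/

/-- The geometric series `1 / (1 - z)` in `ℤ⟦z⟧`. -/
noncomputable def geomSeries : PowerSeries ℤ := PowerSeries.mk 1

lemma geomSeries_mul : geomSeries * (1 - PowerSeries.X) = 1 :=
  PowerSeries.mk_one_mul_one_sub_eq_one ℤ

/-- The substitution `x ↦ z`, `y ↦ -z / (1 - z)` from `ℤ[x][y]` to `ℤ⟦z⟧`. -/
noncomputable def tutteSubst : Polynomial (Polynomial ℤ) →+* PowerSeries ℤ :=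
  Polynomial.eval₂RingHom Polynomial.coeToPowerSeries.ringHom (-(PowerSeries.X * geomSeries))

lemma coeff_X_pow_mul_geomSeries (h k d : ℕ) :
    PowerSeries.coeff h (PowerSeries.X ^ k * geomSeries ^ (d + 1)) =
      if k ≤ h then ((d + (h - k)).choose d : ℤ) else 0 := by
  rw [PowerSeries.coeff_X_pow_mul', geomSeries, PowerSeries.mk_one_pow_eq_mk_choose_add,
    PowerSeries.coeff_mk]

/-- The alternating sums in the coefficients of `T` are the coefficients of a power series
obtained from `T` by substitution. -/
lemma coeff_tutteSubst (T : Polynomial (Polynomial ℤ)) (h : ℕ) :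
    ∑ i ∈ Finset.range (h + 1), ∑ j ∈ Finset.range (h - i + 1),
        ((h - i).choose j : ℤ) * (-1 : ℤ) ^ j * (T.coeff j).coeff i =
      PowerSeries.coeff h (geomSeries * tutteSubst T) := by
  induction T using Polynomial.induction_on' with
  | add p q hp hq =>
    simp only [Polynomial.coeff_add, mul_add, Finset.sum_add_distrib, map_add, hp, hq]
  | monomial j c =>
    induction c using Polynomial.induction_on' with
    | add p q hp hq =>
      simp only [map_add, Polynomial.coeff_add, mul_add, Finset.sum_add_distrib, hp, hq]
    | monomial i a =>
      have e : geomSeries * tutteSubst (Polynomial.monomial j (Polynomial.monomial i a)) =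
          PowerSeries.C (a * (-1) ^ j) *
            (PowerSeries.X ^ (i + j) * geomSeries ^ (j + 1)) := by
        simp only [tutteSubst, Polynomial.coe_eval₂RingHom,
          Polynomial.coeToPowerSeries.ringHom_apply, ← Polynomial.C_mul_X_pow_eq_monomial,
          Polynomial.coe_C, Polynomial.coe_X,
          Polynomial.eval₂_C, Polynomial.eval₂_X,
          map_mul, map_pow, map_neg, map_one]
        rw [neg_pow]
        ring
      rw [e, PowerSeries.coeff_C_mul, coeff_X_pow_mul_geomSeries]
      have hc : ∀ i' j', ((Polynomial.monomial j (Polynomial.monomial i a)).coeff j').coeff i' =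
          if i = i' then (if j = j' then a else 0) else 0 := by
        intro i' j'
        rw [Polynomial.coeff_monomial]
        split_ifs with h1 h2 h2 <;> simp [Polynomial.coeff_monomial, h2]
      simp only [hc, mul_ite, mul_zero]
      by_cases hij : i + j ≤ h
      · rw [Finset.sum_eq_single i, Finset.sum_eq_single j]
        · have : j + (h - (i + j)) = h - i := by omega
          simp only [if_true, hij, this]
          ring
        · intro b _ hb
          simp [hb.symm]
        · intro hb
          simp at hb
          omega
        · intro b _ hb
          simp [hb.symm]
        · intro hb
          simp at hb
          omega
      · rw [if_neg hij]
        refine Finset.sum_eq_zero fun i' hi' => Finset.sum_eq_zero fun j' hj' => ?_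
        simp only [Finset.mem_range] at hi' hj'
        split_ifs <;> first | rfl | omega

/-- After substitution, the contribution of a subset of size `s` and rank `b` to the Tutte
polynomial does not depend on `b`. -/
lemma tutteSubst_term {a b s : ℕ} (hba : b ≤ a) (hbs : b ≤ s) :
    tutteSubst ((Polynomial.C Polynomial.X - 1) ^ (a - b) * (Polynomial.X - 1) ^ (s - b)) =
      (-1) ^ a * (1 - PowerSeries.X) ^ a * (-geomSeries) ^ s := by
  obtain ⟨k, rfl⟩ := Nat.exists_eq_add_of_le hba
  obtain ⟨l, rfl⟩ := Nat.exists_eq_add_of_le hbs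
  have hG := geomSeries_mul
  have hx : tutteSubst (Polynomial.C Polynomial.X - 1) = -(1 - PowerSeries.X) := by
    simp [tutteSubst]
  have hy : tutteSubst (Polynomial.X - 1) = -geomSeries := by
    simp only [tutteSubst, map_sub, map_one, Polynomial.coe_eval₂RingHom, Polynomial.eval₂_X]
    linear_combination hG
  have hb : ((-1) * (1 - PowerSeries.X) * (-geomSeries)) ^ b = 1 := by
    rw [show (-1) * (1 - PowerSeries.X) * (-geomSeries) = 1 by linear_combination hG, one_pow]
  rw [map_mul, map_pow, map_pow, hx, hy, Nat.add_sub_cancel_left, Nat.add_sub_cancel_left]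
  calc (-(1 - PowerSeries.X)) ^ k * (-geomSeries) ^ l
      = ((-1) * (1 - PowerSeries.X) * (-geomSeries)) ^ b *
          (((-1) * (1 - PowerSeries.X)) ^ k * (-geomSeries) ^ l) := by rw [hb, one_mul, neg_one_mul]
    _ = _ := by simp only [mul_pow, pow_add]; ring

lemma geomSeries_mul_tutteSubst {E : Type*} [Fintype E] [DecidableEq E]
    (r : Finset E → ℕ)
    (hr : ∀ S : Finset E, r S ≤ min (r Finset.univ) S.card) :
    geomSeries * tutteSubst (∑ S : Finset E,
      (Polynomial.C Polynomial.X - 1) ^ (r Finset.univ - r S) *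
        (Polynomial.X - 1) ^ (S.card - r S)) =
    PowerSeries.C ((-1) ^ (Fintype.card E - r Finset.univ)) *
      (PowerSeries.X ^ Fintype.card E *
        geomSeries ^ (Fintype.card E - r Finset.univ + 1)) := by
  have hG := geomSeries_mul
  have hrm : r Finset.univ ≤ Fintype.card E := (hr Finset.univ).trans (min_le_right _ _)
  have hsum : ∑ S : Finset E, (-geomSeries) ^ S.card =
      (-1 * (PowerSeries.X * geomSeries)) ^ Fintype.card E := by
    have := Fintype.sum_pow_mul_eq_add_pow E (-geomSeries) 1
    simp only [one_pow, mul_one] at this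
    rw [this]
    congr 1
    linear_combination -hG
  rw [map_sum, Finset.sum_congr rfl fun S _ =>
    tutteSubst_term ((hr S).trans (min_le_left _ _)) ((hr S).trans (min_le_right _ _)),
    ← Finset.mul_sum, hsum]
  generalize Fintype.card E = m at *
  generalize r Finset.univ = a at *
  obtain ⟨k, rfl⟩ := Nat.exists_eq_add_of_le hrm
  have ha : (geomSeries * (1 - PowerSeries.X)) ^ a = 1 := by rw [hG, one_pow]
  have hs : ((-1 : PowerSeries ℤ) ^ a) * (-1) ^ a = 1 := by
    rw [← mul_pow]; simp
  rw [Nat.add_sub_cancel_left, map_pow, map_neg, map_one]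
  calc _ = ((-1 : PowerSeries ℤ) ^ a * (-1) ^ a) * (geomSeries * (1 - PowerSeries.X)) ^ a *
        ((-1) ^ k * (PowerSeries.X ^ (a + k) * geomSeries ^ (k + 1))) := by
          simp only [mul_pow, pow_add]; ring
    _ = _ := by rw [hs, ha, one_mul, one_mul]

/-- Generalized Brylawski identities for a ranked set `M = (E, r)`.
The Tutte polynomial is represented as an element of `ℤ[x][y]`, where the
variable `x` is `Polynomial.C Polynomial.X` and the variable `y` is
`Polynomial.X`, so the coefficient `t i j` of `x^i y^j` is `(T.coeff j).coeff i`. -/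
theorem brylawski_generalized {E : Type*} [Fintype E] [DecidableEq E]
    (r : Finset E → ℕ)
    (hr : ∀ S : Finset E, r S ≤ min (r Finset.univ) S.card)
    (T : Polynomial (Polynomial ℤ))
    (hT : T = ∑ S : Finset E,
      (Polynomial.C Polynomial.X - 1) ^ (r Finset.univ - r S) *
        (Polynomial.X - 1) ^ (S.card - r S))
    (t : ℕ → ℕ → ℤ)
    (ht : ∀ i j, t i j = (T.coeff j).coeff i)
    (h : ℕ) :
    (Fintype.card E ≤ h →
      ∑ i ∈ Finset.range (h + 1), ∑ j ∈ Finset.range (h - i + 1),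
        ((h - i).choose j : ℤ) * (-1 : ℤ) ^ j * t i j =
      (-1 : ℤ) ^ (Fintype.card E - r Finset.univ) *
        ((h - r Finset.univ).choose (h - Fintype.card E) : ℤ)) ∧
    (h < Fintype.card E →
      ∑ i ∈ Finset.range (h + 1), ∑ j ∈ Finset.range (h - i + 1),
        ((h - i).choose j : ℤ) * (-1 : ℤ) ^ j * t i j = 0) := by
  have hrm : r Finset.univ ≤ Fintype.card E := (hr Finset.univ).trans (min_le_right _ _)
  simp only [ht]
  rw [coeff_tutteSubst, hT, geomSeries_mul_tutteSubst r hr, PowerSeries.coeff_C_mul,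
    coeff_X_pow_mul_geomSeries]
  refine ⟨fun hm => ?_, fun hm => ?_⟩
  · rw [if_pos hm, show Fintype.card E - r Finset.univ + (h - Fintype.card E) =
      h - r Finset.univ by omega]
    congr 2
    exact Nat.choose_symm_of_eq_add (by omega)
  · rw [if_neg (by omega), mul_zero]
end

section
/- Let E be a finite set of size m and let r : 2^E → ℤ≥0 be a function satisfying r(S) ≤ min(r(E), |S|) for every S ⊆ E; write r = r(E). Define the Tutte polynomial T_M(x,y) = ∑_{S ⊆ E} (x-1)^{r(E)-r(S)} (y-1)^{|S|-r(S)} with coefficients t_{ij} given by T_M(x,y) = ∑_{i,j} t_{ij} x^i y^j. Then for h = m, the sum satisfies ∑_{i=0}^{m} ∑_{j=0}^{m-i} binom(m-i, j) (-1)^j t_{ij} = (-1)^{m-r}. -/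
open Polynomial Finset

/-!
Let `L` be the linear functional `x ^ i * y ^ j ↦ (-1) ^ j * C(m - i, j)`; the left-hand side is `L T`.
Every binomial coefficient below is read off as a coefficient of a power of `1 + X`.

* Since `C(m - i, j)` is the coefficient of `X ^ j` in `(1 + X) ^ (m - i)`, the binomial theorem
  turns the sum over `i` for `(x - 1) ^ a` into a coefficient of
  `(1 + X) ^ (m - a) * (1 - (1 + X)) ^ a` (`sum_coeff_mul_choose`).
* The sum over `j` for `(y - 1) ^ b` is then a convolution with `(1 + X) ^ b`
  (`sum_neg_one_pow_mul_coeff`). With `a = r - r(S)` and `b = |S| - r(S)`, the outcome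
  `(-1) ^ (r + |S|) * C(m - r + |S|, m)` depends on `|S|` only (`coeff_rank_term`).
* Summing over `S` gives `(-1) ^ r` times the coefficient of `X ^ m` in
  `(1 + X) ^ (m - r) * (1 - (1 + X)) ^ m`, which is `(-1) ^ m` (`sum_choose_mul_choose`).
-/

lemma coeff_X_sub_one_pow_int (a i : ℕ) :
    ((X - 1 : ℤ[X]) ^ a).coeff i = (-1) ^ (a - i) * (a.choose i : ℤ) := by
  simpa [sub_eq_add_neg] using coeff_X_add_C_pow (-1 : ℤ) a i

/-- The coefficients of the homogenization `(1 - w) ^ a * w ^ (m - a)` of `(X - 1) ^ a`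
at `w = 1 + X`. -/
lemma sum_coeff_mul_choose (m a j : ℕ) (ha : a ≤ m) :
    ∑ i ∈ range (m + 1), ((X - 1 : ℤ[X]) ^ a).coeff i * ((m - i).choose j : ℤ) =
      ((1 + X : ℤ[X]) ^ (m - a) * (-X) ^ a).coeff j := by
  have h : (-X : ℤ[X]) = 1 + (-(1 + X)) := by ring
  rw [h, add_pow 1 (-(1 + X) : ℤ[X]), mul_sum, finsetSum_coeff]
  symm
  refine (sum_subset (range_mono (by omega : a + 1 ≤ m + 1)) ?_).trans ?_
  · intro i _ hi
    rw [Nat.choose_eq_zero_of_lt (by simpa using hi)]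
    simp
  · refine sum_congr rfl fun i _ => ?_
    rw [coeff_X_sub_one_pow_int]
    rcases le_or_gt i a with hi | hi
    · have e : (1 + X : ℤ[X]) ^ (m - a) * (1 ^ i * (-(1 + X)) ^ (a - i) * (a.choose i : ℤ[X])) =
          C ((-1) ^ (a - i) * (a.choose i : ℤ)) * (1 + X) ^ (m - i) := by
        rw [neg_pow, show m - i = (m - a) + (a - i) by omega, pow_add]
        simp
        ring
      rw [e, coeff_C_mul, coeff_one_add_X_pow]
    · simp [Nat.choose_eq_zero_of_lt hi]

/-- Pairing with `(X - 1) ^ b` is a convolution, because `C(b, j) = C(b, b - j)`. -/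
lemma sum_neg_one_pow_mul_coeff (m b : ℕ) (hb : b ≤ m) (Q : ℤ[X]) :
    ∑ j ∈ range (m + 1), (-1) ^ j * ((X - 1 : ℤ[X]) ^ b).coeff j * Q.coeff j =
      (-1) ^ b * (Q * (1 + X) ^ b).coeff b := by
  rw [coeff_mul, Nat.sum_antidiagonal_eq_sum_range_succ_mk, mul_sum]
  symm
  have h : ∀ j ∈ range b.succ, (-1 : ℤ) ^ b * (Q.coeff j * ((1 + X : ℤ[X]) ^ b).coeff (b - j)) =
      (-1) ^ j * ((X - 1 : ℤ[X]) ^ b).coeff j * Q.coeff j := by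
    intro j hj
    have hj : j ≤ b := by simpa [Nat.lt_succ_iff] using hj
    rw [coeff_X_sub_one_pow_int, coeff_one_add_X_pow, Nat.choose_symm hj]
    obtain ⟨d, rfl⟩ := Nat.exists_eq_add_of_le hj
    rw [Nat.add_sub_cancel_left, pow_add]
    ring
  rw [sum_congr rfl h]
  refine sum_subset (range_mono (by omega : b + 1 ≤ m + 1)) ?_
  intro j _ hj
  rw [coeff_X_sub_one_pow_int, Nat.choose_eq_zero_of_lt (by simpa using hj)]
  simp

/-- The contribution of a set of cardinality `k` and rank `s`: it does not depend on `s`. -/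
lemma coeff_rank_term (m R k s : ℕ) (hR : R ≤ m) (hs : s ≤ R) (hk : s ≤ k) :
    (-1 : ℤ) ^ (k - s) *
      ((1 + X : ℤ[X]) ^ (m - (R - s)) * (-X) ^ (R - s) * (1 + X) ^ (k - s)).coeff (k - s) =
      (-1) ^ (R + k) * ((m - R + k).choose m : ℤ) := by
  obtain ⟨a, rfl⟩ := Nat.exists_eq_add_of_le hs
  obtain ⟨b, rfl⟩ := Nat.exists_eq_add_of_le hk
  obtain ⟨c, rfl⟩ := Nat.exists_eq_add_of_le hR
  have e : (1 + X : ℤ[X]) ^ (s + a + c - a) * (-X) ^ a * (1 + X) ^ b =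
      C ((-1) ^ a) * ((1 + X) ^ (c + (s + b)) * X ^ a) := by
    rw [show s + a + c - a = s + c by omega, neg_pow]
    simp
    ring
  have sgn : (-1 : ℤ) ^ (s + a + (s + b)) = (-1) ^ b * (-1) ^ a := by
    rw [show s + a + (s + b) = 2 * s + (b + a) by ring, pow_add, pow_mul, pow_add]
    simp
  simp only [Nat.add_sub_cancel_left]
  rw [e, coeff_C_mul, coeff_mul_X_pow', sgn, mul_assoc]
  split_ifs with h
  · obtain ⟨d, rfl⟩ := Nat.exists_eq_add_of_le h
    rw [coeff_one_add_X_pow, Nat.add_sub_cancel_left,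
      Nat.choose_symm_of_eq_add (show c + (s + (a + d)) = d + (s + a + c) by ring)]
  · rw [Nat.choose_eq_zero_of_lt (by omega)]
    simp

/-- The `m`-th finite difference of `C(n, m)` as a polynomial in `n` is `1`. -/
lemma sum_choose_mul_choose (m c : ℕ) :
    ∑ k ∈ range (m + 1), (m.choose k : ℤ) * ((-1) ^ k * ((c + k).choose m : ℤ)) = (-1) ^ m := by
  have h : ((1 + X : ℤ[X]) ^ c * (-X) ^ m).coeff m = (-1) ^ m := by
    have e : (1 + X : ℤ[X]) ^ c * (-X) ^ m = C ((-1) ^ m) * ((1 + X) ^ c * X ^ m) := by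
      rw [neg_pow]
      simp
      ring
    rw [e, coeff_C_mul, coeff_mul_X_pow']
    simp [coeff_one_add_X_pow]
  rw [← h, show (-X : ℤ[X]) = -(1 + X) + 1 by ring, add_pow (-(1 + X) : ℤ[X]) 1, mul_sum, finsetSum_coeff]
  refine sum_congr rfl fun k _ => ?_
  have e : (1 + X : ℤ[X]) ^ c * ((-(1 + X)) ^ k * 1 ^ (m - k) * (m.choose k : ℤ[X])) =
      C ((-1) ^ k * (m.choose k : ℤ)) * (1 + X) ^ (c + k) := by
    rw [neg_pow, pow_add]
    simp
    ring
  rw [e, coeff_C_mul, coeff_one_add_X_pow]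
  ring

lemma coeff_coeff_term (a b i j : ℕ) :
    (((C X - 1 : ℤ[X][X]) ^ a * (X - 1) ^ b).coeff j).coeff i =
      ((X - 1 : ℤ[X]) ^ a).coeff i * ((X - 1 : ℤ[X]) ^ b).coeff j := by
  have h1 : (C X - 1 : ℤ[X][X]) ^ a = C ((X - 1) ^ a) := by simp
  have h2 : (X - 1 : ℤ[X][X]) ^ b = ((X - 1 : ℤ[X]) ^ b).map C := by simp
  rw [h1, h2, coeff_C_mul, coeff_map, coeff_mul_C]

/-- The functional `x ^ i * y ^ j ↦ (-1) ^ j * C(m - i, j)` on `(x - 1) ^ a * (y - 1) ^ b`. -/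
lemma functional_term (m a b : ℕ) (ha : a ≤ m) (hb : b ≤ m) :
    ∑ i ∈ range (m + 1), ∑ j ∈ range (m - i + 1), ((m - i).choose j : ℤ) * (-1 : ℤ) ^ j *
        (((X - 1 : ℤ[X]) ^ a).coeff i * ((X - 1 : ℤ[X]) ^ b).coeff j) =
      (-1) ^ b * ((1 + X : ℤ[X]) ^ (m - a) * (-X) ^ a * (1 + X) ^ b).coeff b := by
  rw [← sum_neg_one_pow_mul_coeff m b hb]
  -- `C(m - i, j) = 0` for `j > m - i`, so `j` may range over a set independent of `i`.
  have h : ∀ i ∈ range (m + 1), ∑ j ∈ range (m - i + 1), ((m - i).choose j : ℤ) * (-1 : ℤ) ^ j *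
        (((X - 1 : ℤ[X]) ^ a).coeff i * ((X - 1 : ℤ[X]) ^ b).coeff j) =
      ∑ j ∈ range (m + 1), ((m - i).choose j : ℤ) * (-1 : ℤ) ^ j *
        (((X - 1 : ℤ[X]) ^ a).coeff i * ((X - 1 : ℤ[X]) ^ b).coeff j) := by
    intro i _
    refine sum_subset (range_mono (by omega : m - i + 1 ≤ m + 1)) ?_
    intro j _ hj
    rw [Nat.choose_eq_zero_of_lt (by simpa using hj)]
    simp
  rw [sum_congr rfl h, sum_comm]
  refine sum_congr rfl fun j _ => ?_
  rw [← sum_coeff_mul_choose m a j ha, mul_sum]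
  exact sum_congr rfl fun i _ => by ring

/-- The `h = m` case of the generalized Brylawski identities:
`∑_{i=0}^{m} ∑_{j=0}^{m-i} C(m-i, j) (-1)^j t_{ij} = (-1)^{m-r}`.
The Tutte polynomial is an element of `ℤ[x][y]`, where `x` is
`Polynomial.C Polynomial.X` and `y` is `Polynomial.X`, so the coefficient
`t i j` of `x^i y^j` is `(T.coeff j).coeff i`. -/
theorem brylawski_at_m {E : Type*} [Fintype E] [DecidableEq E]
    (r : Finset E → ℕ)
    (hr : ∀ S : Finset E, r S ≤ min (r Finset.univ) S.card)
    (T : Polynomial (Polynomial ℤ))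
    (hT : T = ∑ S : Finset E,
      (Polynomial.C Polynomial.X - 1) ^ (r Finset.univ - r S) *
        (Polynomial.X - 1) ^ (S.card - r S))
    (t : ℕ → ℕ → ℤ)
    (ht : ∀ i j, t i j = (T.coeff j).coeff i) :
    ∑ i ∈ Finset.range (Fintype.card E + 1),
      ∑ j ∈ Finset.range (Fintype.card E - i + 1),
        ((Fintype.card E - i).choose j : ℤ) * (-1 : ℤ) ^ j * t i j =
      (-1 : ℤ) ^ (Fintype.card E - r Finset.univ) := by
  set m := Fintype.card E with hm
  set R := r Finset.univ with hRdef
  have hR : R ≤ m := by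
    have := (le_min_iff.mp (hr Finset.univ)).2
    rwa [Finset.card_univ] at this
  have ht' : ∀ i j, t i j = ∑ S : Finset E,
      ((X - 1 : ℤ[X]) ^ (R - r S)).coeff i * ((X - 1 : ℤ[X]) ^ (S.card - r S)).coeff j := by
    intro i j
    rw [ht, hT, finsetSum_coeff, finsetSum_coeff]
    exact sum_congr rfl fun S _ => coeff_coeff_term _ _ _ _
  have swap : ∑ i ∈ range (m + 1), ∑ j ∈ range (m - i + 1),
        ((m - i).choose j : ℤ) * (-1 : ℤ) ^ j * t i j =
      ∑ S : Finset E, ∑ i ∈ range (m + 1), ∑ j ∈ range (m - i + 1),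
        ((m - i).choose j : ℤ) * (-1 : ℤ) ^ j * (((X - 1 : ℤ[X]) ^ (R - r S)).coeff i *
          ((X - 1 : ℤ[X]) ^ (S.card - r S)).coeff j) := by
    simp only [ht', mul_sum]
    rw [sum_comm (s := (Finset.univ : Finset (Finset E)))]
    exact sum_congr rfl fun i _ => sum_comm
  have term : ∀ S ∈ (Finset.univ : Finset E).powerset,
      ∑ i ∈ range (m + 1), ∑ j ∈ range (m - i + 1),
        ((m - i).choose j : ℤ) * (-1 : ℤ) ^ j * (((X - 1 : ℤ[X]) ^ (R - r S)).coeff i *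
          ((X - 1 : ℤ[X]) ^ (S.card - r S)).coeff j) =
      (fun k : ℕ => (-1 : ℤ) ^ (R + k) * ((m - R + k).choose m : ℤ)) S.card := by
    intro S _
    have h1 := (le_min_iff.mp (hr S)).1
    have h2 := (le_min_iff.mp (hr S)).2
    have h3 : S.card ≤ m := S.card_le_univ
    rw [functional_term m _ _ (by omega) (by omega)]
    exact coeff_rank_term m R S.card (r S) hR h1 h2
  rw [swap, ← Finset.powerset_univ, sum_congr rfl term,
    sum_powerset_apply_card
      (fun k : ℕ => (-1 : ℤ) ^ (R + k) * ((m - R + k).choose m : ℤ)), Finset.card_univ, ← hm]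
  have fin : ∑ k ∈ range (m + 1), m.choose k • ((-1 : ℤ) ^ (R + k) * ((m - R + k).choose m : ℤ)) =
      (-1) ^ R * (-1) ^ m := by
    rw [← sum_choose_mul_choose m (m - R), mul_sum]
    refine sum_congr rfl fun k _ => ?_
    rw [nsmul_eq_mul, pow_add]
    ring
  rw [fin]
  obtain ⟨c, hc⟩ := Nat.exists_eq_add_of_le hR
  rw [hc, Nat.add_sub_cancel_left, ← pow_add, show R + (R + c) = 2 * R + c by ring, pow_add,
    pow_mul]
  simp
end

section
/- Let G be a finite simple graph with n vertices, m edges and c connected components. Define the Tutte polynomial of G by T_G(x,y) = ∑_{A ⊆ E(G)} (x-1)^{k(A)-c} (y-1)^{k(A)+|A|-n}, where k(A) is the number of connected components of the spanning subgraph (V(G), A), and write T_G(x,y) = ∑_{i,j} t_{ij} x^i y^j. Then for every integer h ≥ 0: if h ≥ m then ∑_{i=0}^{h} ∑_{j=0}^{h-i} binom(h-i, j) (-1)^j t_{ij} = (-1)^{m-n+c} binom(h-n+c, h-m), and if h < m then the sum equals 0. -/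
open Polynomial Finset

/-!
The sum in question is a linear functional of the Tutte polynomial. Since
`∑ N, binom(N, j) z^N = z^j / (1 - z)^(j + 1)`, the functional sends a polynomial `P(x, y)` to the
coefficient of `z^h` in the power series `P(z, -z / (1 - z)) / (1 - z)`
(`coeff_geom_mul_hyperbolaSubst`).

This substitution takes `x - 1` to `-(1 - z)` and `y - 1` to `-1 / (1 - z)`, so it parametrizes the
hyperbola `(x - 1) (y - 1) = 1`, on which the Tutte polynomial collapses: the term of `A` depends
on `A` only through `|A|`, and the binomial theorem gives
`T = (z - 1)^(n - c - m) z^m` (`hyperbolaSubst_tutte_sum`). The wanted coefficient is then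
read off from the expansion of `(1 - z)^(-(m - n + c + 1))`.

The truncated exponents in the definition of the Tutte polynomial are honest differences
because deleting edges cannot decrease the number of components, and because adding one edge
decreases it by at most one, whence `n ≤ k(A) + |A|` (`card_le_components_add_card`).
-/

/-! ### Counting components -/

/-- Adding an edge `e = s(u, v)` decreases the number of connected components by at most one:
components other than that of `u` are not merged with each other. -/
lemma components_le_insert {V : Type*} [Finite V] [DecidableEq V] (A : Finset (Sym2 V))
    (e : Sym2 V) :
    Nat.card (SimpleGraph.fromEdgeSet (↑A : Set (Sym2 V))).ConnectedComponent ≤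
      Nat.card (SimpleGraph.fromEdgeSet
        (↑(insert e A) : Set (Sym2 V))).ConnectedComponent + 1 := by
  classical
  induction e using Sym2.ind with | _ u v => ?_
  set G := SimpleGraph.fromEdgeSet (↑A : Set (Sym2 V)) with hG
  set G' := SimpleGraph.fromEdgeSet (↑(insert s(u, v) A) : Set (Sym2 V)) with hG'
  have hle : G ≤ G' := SimpleGraph.fromEdgeSet_mono (by simp)
  -- Redirecting the component of `u` to that of `v` yields a function constant along `G'`-edges.
  let r : V → G.ConnectedComponent := fun a =>
    if G.connectedComponentMk a = G.connectedComponentMk u then G.connectedComponentMk v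
    else G.connectedComponentMk a
  have hadj : ∀ a b, G'.Adj a b → r a = r b := by
    intro a b hab
    rw [hG', SimpleGraph.fromEdgeSet_adj] at hab
    obtain ⟨hab, hne⟩ := hab
    rw [Finset.mem_coe, Finset.mem_insert] at hab
    rcases hab with hab | hab
    · rcases Sym2.eq_iff.1 hab with ⟨rfl, rfl⟩ | ⟨rfl, rfl⟩ <;> simp [r]
    · have : G.Adj a b := by
        rw [hG, SimpleGraph.fromEdgeSet_adj]
        exact ⟨hab, hne⟩
      have := SimpleGraph.ConnectedComponent.connectedComponentMk_eq_of_adj this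
      simp only [r, this]
  have hreach : ∀ a b, G'.Reachable a b → r a = r b := by
    rintro a b ⟨p⟩
    induction p with
    | nil => rfl
    | cons h _ ih => exact (hadj _ _ h).trans ih
  let f : G.ConnectedComponent → Option G'.ConnectedComponent := fun C =>
    if C = G.connectedComponentMk u then none else some (C.map (SimpleGraph.Hom.ofLE hle))
  have hf : Function.Injective f := by
    intro C D
    induction C using SimpleGraph.ConnectedComponent.ind with | _ a => ?_
    induction D using SimpleGraph.ConnectedComponent.ind with | _ b => ?_
    intro hCD
    by_cases ha : G.connectedComponentMk a = G.connectedComponentMk u <;>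
      by_cases hb : G.connectedComponentMk b = G.connectedComponentMk u
    · rw [ha, hb]
    · simp [f, ha, hb] at hCD
    · simp [f, ha, hb] at hCD
    · simp only [f, ha, hb, if_false, Option.some.injEq] at hCD
      have := hreach a b (SimpleGraph.ConnectedComponent.exact hCD)
      simpa only [r, ha, hb, if_false] using this
  have := Nat.card_le_card_of_injective f hf
  rwa [Finite.card_option] at this

lemma card_le_components_add_card {V : Type*} [Fintype V] [DecidableEq V]
    (A : Finset (Sym2 V)) :
    Fintype.card V ≤
      Nat.card (SimpleGraph.fromEdgeSet (↑A : Set (Sym2 V))).ConnectedComponent + A.card := by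
  induction A using Finset.induction_on with
  | empty =>
    rw [Finset.coe_empty, SimpleGraph.fromEdgeSet_empty, Finset.card_empty, add_zero,
      ← Nat.card_eq_fintype_card]
    refine Nat.card_le_card_of_injective (SimpleGraph.connectedComponentMk ⊥) ?_
    intro a b hab
    exact SimpleGraph.reachable_bot.1 (SimpleGraph.ConnectedComponent.exact hab)
  | insert e A he ih =>
    have := components_le_insert A e
    rw [Finset.card_insert_of_notMem he]
    omega

/-! ### The functional as a coefficient of a power series -/

/-- The geometric series `1 / (1 - z)`. -/
noncomputable def geom : PowerSeries ℤ := PowerSeries.mk 1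

lemma geom_mul : geom * (1 - PowerSeries.X) = 1 := PowerSeries.mk_one_mul_one_sub_eq_one ℤ

lemma coeff_geom_pow (d N : ℕ) :
    PowerSeries.coeff N (geom ^ (d + 1)) = ((d + N).choose d : ℤ) := by
  rw [geom, PowerSeries.mk_one_pow_eq_mk_choose_add, PowerSeries.coeff_mk]

/-- The substitution `x ↦ z`, `y ↦ -z / (1 - z)` from polynomials in `x` and `y` to power series
in `z`. -/
noncomputable def hyperbolaSubst : Polynomial (Polynomial ℤ) →+* PowerSeries ℤ :=
  Polynomial.eval₂RingHom Polynomial.coeToPowerSeries.ringHom (-(PowerSeries.X * geom))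

/-- Comparison on monomials: `x^a y^b` goes to `(-1)^b z^(a + b) / (1 - z)^(b + 1)`, whose
coefficient at `z^h` is `(-1)^b binom(h - a, b)`. -/
lemma coeff_geom_mul_hyperbolaSubst (h : ℕ) (P : Polynomial (Polynomial ℤ)) :
    PowerSeries.coeff h (geom * hyperbolaSubst P) =
      ∑ i ∈ Finset.range (h + 1), ∑ j ∈ Finset.range (h - i + 1),
        ((h - i).choose j : ℤ) * (-1 : ℤ) ^ j * (P.coeff j).coeff i := by
  induction P using Polynomial.induction_on' with
  | add p q hp hq =>
    simp only [map_add, mul_add, hp, hq, Polynomial.coeff_add, Finset.sum_add_distrib]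
  | monomial b p =>
    induction p using Polynomial.induction_on' with
    | add p q hp hq =>
      simp only [map_add, mul_add, hp, hq, Polynomial.coeff_add, Finset.sum_add_distrib]
    | monomial a s =>
      have key : geom * hyperbolaSubst (Polynomial.monomial b (Polynomial.monomial a s)) =
          PowerSeries.C (s * (-1) ^ b) * (PowerSeries.X ^ (a + b) * geom ^ (b + 1)) := by
        simp only [hyperbolaSubst, Polynomial.coe_eval₂RingHom, Polynomial.eval₂_C,
          Polynomial.eval₂_X, Polynomial.coeToPowerSeries.ringHom_apply,
          ← Polynomial.C_mul_X_pow_eq_monomial,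
          Polynomial.coe_C, Polynomial.coe_X, map_mul, map_pow, map_neg, map_one]
        ring
      rw [key, PowerSeries.coeff_C_mul, PowerSeries.coeff_X_pow_mul', coeff_geom_pow]
      have hco : ∀ i j, ((Polynomial.monomial b (Polynomial.monomial a s)).coeff j).coeff i =
          if j = b then (if i = a then s else 0) else 0 := by
        intro i j
        rw [Polynomial.coeff_monomial]
        by_cases hj : b = j
        · subst hj
          simp [Polynomial.coeff_monomial, eq_comm]
        · simp [hj, Ne.symm hj]
      simp only [hco, mul_ite, mul_zero]
      by_cases hab : a + b ≤ h
      · rw [if_pos hab, Finset.sum_eq_single a, Finset.sum_eq_single b]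
        · have : b + (h - (a + b)) = h - a := by omega
          simp [this]
          ring
        · intro j _ hj
          simp [hj]
        · intro hb
          exact absurd (Finset.mem_range.2 (by omega)) hb
        · intro i _ hi
          simp [hi]
        · intro ha
          exact absurd (Finset.mem_range.2 (by omega)) ha
      · rw [if_neg hab]
        symm
        refine Finset.sum_eq_zero fun i hi => Finset.sum_eq_zero fun j hj => ?_
        rw [Finset.mem_range] at hi hj
        split_ifs
        · omega
        · rfl
        · rfl

/-! ### Evaluation on the hyperbola -/

/-- The image of a Tutte-like sum under `hyperbolaSubst`, for any rank data: `a A` and `b A` are the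
exponents of `x - 1` and `y - 1`, and `r` is the rank of the whole edge set `E`. -/
lemma hyperbolaSubst_tutte_sum {α : Type*} (E : Finset α) (a b : Finset α → ℕ) (r d : ℕ)
    (hE : E.card = r + d) (hab : ∀ A ⊆ E, a A + A.card = b A + r) :
    hyperbolaSubst (∑ A ∈ E.powerset, (Polynomial.C Polynomial.X - 1) ^ (a A) *
      (Polynomial.X - 1) ^ (b A)) =
      PowerSeries.C ((-1) ^ d) * (PowerSeries.X ^ E.card * geom ^ d) := by
  have hu := geom_mul
  have hx : hyperbolaSubst (Polynomial.C Polynomial.X - 1) = PowerSeries.X - 1 := by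
    simp [hyperbolaSubst]
  have hy : hyperbolaSubst (Polynomial.X - 1) = -geom := by
    simp only [hyperbolaSubst, map_sub, map_one, Polynomial.coe_eval₂RingHom, Polynomial.eval₂_X]
    linear_combination hu
  have hinv : (PowerSeries.X - 1) * (-geom) = 1 := by linear_combination hu
  have hterm : ∀ A ∈ E.powerset, hyperbolaSubst ((Polynomial.C Polynomial.X - 1) ^ (a A) *
      (Polynomial.X - 1) ^ (b A)) = (PowerSeries.X - 1) ^ r * ((-geom) ^ A.card) := by
    intro A hA
    have h := hab A (Finset.mem_powerset.1 hA)
    rw [map_mul, map_pow, map_pow, hx, hy]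
    calc (PowerSeries.X - 1) ^ (a A) * (-geom) ^ (b A)
        = (PowerSeries.X - 1) ^ (a A) * (-geom) ^ (b A) *
            ((PowerSeries.X - 1) * (-geom)) ^ A.card := by rw [hinv, one_pow, mul_one]
      _ = (PowerSeries.X - 1) ^ (a A + A.card) * (-geom) ^ (b A) * (-geom) ^ A.card := by
          rw [mul_pow]; ring
      _ = ((PowerSeries.X - 1) * (-geom)) ^ (b A) *
            ((PowerSeries.X - 1) ^ r * (-geom) ^ A.card) := by
          rw [h, mul_pow]; ring
      _ = _ := by rw [hinv, one_pow, one_mul]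
  have hbin : ∑ A ∈ E.powerset, (-geom) ^ A.card = (-(PowerSeries.X * geom)) ^ E.card := by
    have h1 := Finset.sum_pow_mul_eq_add_pow (-geom) 1 E
    simp only [one_pow, mul_one] at h1
    rw [h1]
    congr 1
    linear_combination -hu
  rw [map_sum, Finset.sum_congr rfl hterm, ← Finset.mul_sum, hbin]
  calc (PowerSeries.X - 1) ^ r * (-(PowerSeries.X * geom)) ^ E.card
      = ((PowerSeries.X - 1) * (-geom)) ^ r * (PowerSeries.X ^ E.card * (-geom) ^ d) := by
        rw [← mul_neg, mul_pow, mul_pow, hE]; ring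
    _ = _ := by
        rw [hinv, one_pow, one_mul, neg_pow, map_pow, map_neg, map_one]; ring

/-- Generalized Brylawski identities for graphs. Here `n` is the number of vertices,
`m` the number of edges, `c` the number of connected components, and for `A ⊆ E(G)`,
`k A` is the number of connected components of the spanning subgraph `(V, A)`.
The Tutte polynomial is an element of `ℤ[x][y]`, where `x` is
`Polynomial.C Polynomial.X` and `y` is `Polynomial.X`, so the coefficient
`t i j` of `x^i y^j` is `(T.coeff j).coeff i`. -/
theorem brylawski_generalized_graph {V : Type*} [Fintype V] [DecidableEq V]
    (G : SimpleGraph V) [DecidableRel G.Adj]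
    (n m c : ℕ)
    (hn : n = Fintype.card V)
    (hm : m = G.edgeFinset.card)
    (hc : c = Nat.card G.ConnectedComponent)
    (k : Finset (Sym2 V) → ℕ)
    (hk : ∀ A : Finset (Sym2 V),
      k A = Nat.card (SimpleGraph.fromEdgeSet (↑A : Set (Sym2 V))).ConnectedComponent)
    (T : Polynomial (Polynomial ℤ))
    (hT : T = ∑ A ∈ G.edgeFinset.powerset,
      (Polynomial.C Polynomial.X - 1) ^ (k A - c) *
        (Polynomial.X - 1) ^ (k A + A.card - n))
    (t : ℕ → ℕ → ℤ)
    (ht : ∀ i j, t i j = (T.coeff j).coeff i)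
    (h : ℕ) :
    (m ≤ h →
      ∑ i ∈ Finset.range (h + 1), ∑ j ∈ Finset.range (h - i + 1),
        ((h - i).choose j : ℤ) * (-1 : ℤ) ^ j * t i j =
      (-1 : ℤ) ^ (m - (n - c)) * ((h - (n - c)).choose (h - m) : ℤ)) ∧
    (h < m →
      ∑ i ∈ Finset.range (h + 1), ∑ j ∈ Finset.range (h - i + 1),
        ((h - i).choose j : ℤ) * (-1 : ℤ) ^ j * t i j = 0) := by
  have hGm : k G.edgeFinset = c := by
    rw [hk, SimpleGraph.coe_edgeFinset, SimpleGraph.fromEdgeSet_edgeSet, hc]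
  have hck : ∀ A ⊆ G.edgeFinset, c ≤ k A := by
    intro A hA
    rw [hk, hc]
    have hle : SimpleGraph.fromEdgeSet (↑A : Set (Sym2 V)) ≤ G := by
      conv_rhs => rw [← SimpleGraph.fromEdgeSet_edgeSet G]
      refine SimpleGraph.fromEdgeSet_mono ?_
      rw [← SimpleGraph.coe_edgeFinset]
      exact Finset.coe_subset.2 hA
    exact SimpleGraph.ConnectedComponent.card_le_card_of_le hle
  have hnk : ∀ A : Finset (Sym2 V), n ≤ k A + A.card := by
    intro A
    rw [hk, hn]
    exact card_le_components_add_card A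
  have hcn : c ≤ n := by
    rw [hc, hn, ← Nat.card_eq_fintype_card]
    exact Nat.card_le_card_of_surjective G.connectedComponentMk
      (fun C => C.exists_rep)
  have hmr : n ≤ c + m := by
    have := hnk G.edgeFinset
    rwa [hGm, ← hm] at this
  have hT' := hyperbolaSubst_tutte_sum G.edgeFinset (fun A => k A - c) (fun A => k A + A.card - n)
    (n - c) (m - (n - c)) (by omega) (by
      intro A hA
      have := hck A hA
      have := hnk A
      omega)
  have hsum := coeff_geom_mul_hyperbolaSubst h T
  have hser : geom * hyperbolaSubst T = PowerSeries.C ((-1) ^ (m - (n - c))) *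
      (PowerSeries.X ^ m * geom ^ (m - (n - c) + 1)) := by
    rw [hT, hT', ← hm]
    ring
  rw [hser, PowerSeries.coeff_C_mul, PowerSeries.coeff_X_pow_mul', coeff_geom_pow] at hsum
  simp only [ht]
  rw [← hsum]
  constructor
  · intro hmh
    have h1 : m - (n - c) + (h - m) = h - (n - c) := by omega
    have h2 : (h - (n - c)).choose (m - (n - c)) = (h - (n - c)).choose (h - m) :=
      Nat.choose_symm_of_eq_add (by omega)
    rw [if_pos hmh, h1, h2]
  · intro hlt
    rw [if_neg (by omega), mul_zero]
end

section
/- Let E be a finite set with |E| ≥ 2 and let r : 2^E → ℤ≥0 satisfy r(S) ≤ min(r(E), |S|) for every S ⊆ E. Writing the Tutte polynomial T_M(x,y) = ∑_{S ⊆ E} (x-1)^{r(E)-r(S)} (y-1)^{|S|-r(S)} as ∑_{i,j} t_{ij} x^i y^j, we have t_{10} = t_{01}. -/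
/-!
For `S ⊆ E` put `a = r(E) - r(S)` and `b = |S| - r(S)`. The summand `(x - 1)^a (y - 1)^b` contributes
`-a (-1)^(a + b)` to `t₁₀` and `-b (-1)^(a + b)` to `t₀₁`. Now `a - b = r(E) - |S|`, and `a + b` has
the parity of `r(E) + |S|`, so the unknown `r(S)` disappears from the difference:
`t₁₀ - t₀₁ = (-1)^r(E) * ∑ S, (|S| - r(E)) (-1)^|S|`.
This vanishes once `∑ S, (-1)^|S| = 0` and `∑ S, |S| (-1)^|S| = 0`. Up to sign these are the
coefficients of degree `0` and `1` of `∑ S, (X - 1)^|S| = ((X - 1) + 1)^|E| = X^|E|`, which are zero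
because `|E| ≥ 2`.
-/

open Polynomial Finset

theorem coeff_zero_X_sub_one_pow {R : Type*} [CommRing R] (n : ℕ) :
    ((X - 1 : R[X]) ^ n).coeff 0 = (-1) ^ n := by
  simp [coeff_zero_eq_eval_zero]

theorem coeff_one_X_sub_one_pow {R : Type*} [CommRing R] (n : ℕ) :
    ((X - 1 : R[X]) ^ n).coeff 1 = -n * (-1) ^ n := by
  induction n with
  | zero => simp [coeff_one]
  | succ n ih =>
    rw [pow_succ, mul_sub, mul_one, coeff_sub, coeff_mul_X, ih, coeff_zero_X_sub_one_pow]
    push_cast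
    ring

theorem sum_X_sub_one_pow_card (E : Type*) [Fintype E] :
    ∑ S : Finset E, (X - 1 : ℤ[X]) ^ #S = X ^ Fintype.card E := by
  have h := Fintype.sum_pow_mul_eq_add_pow E (X - 1 : ℤ[X]) 1
  have hX : (X - 1 + 1 : ℤ[X]) = X := by ring
  simpa only [one_pow, mul_one, hX] using h

theorem sum_neg_one_pow_card {E : Type*} [Fintype E] (hE : 2 ≤ Fintype.card E) :
    ∑ S : Finset E, (-1 : ℤ) ^ #S = 0 := by
  have h := congrArg (fun p : ℤ[X] => p.coeff 0) (sum_X_sub_one_pow_card E)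
  simp only [finsetSum_coeff, coeff_zero_X_sub_one_pow, coeff_X_pow] at h
  rw [h, if_neg (by omega)]

theorem sum_card_mul_neg_one_pow_card {E : Type*} [Fintype E] (hE : 2 ≤ Fintype.card E) :
    ∑ S : Finset E, (#S : ℤ) * (-1) ^ #S = 0 := by
  have h := congrArg (fun p : ℤ[X] => p.coeff 1) (sum_X_sub_one_pow_card E)
  simp only [finsetSum_coeff, coeff_one_X_sub_one_pow, coeff_X_pow, neg_mul,
    sum_neg_distrib] at h
  rw [if_neg (by omega)] at h
  exact neg_eq_zero.mp h

/-- The coefficient of `x` in `(x - 1)^a (y - 1)^b`. -/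
theorem coeff_x_term (a b : ℕ) :
    (((C X - 1 : ℤ[X][X]) ^ a * (X - 1) ^ b).coeff 0).coeff 1 = -(a : ℤ) * (-1) ^ (a + b) := by
  have h : (C X - 1 : ℤ[X][X]) ^ a = C ((X - 1) ^ a) := by simp
  have h' : (-1 : ℤ[X]) ^ b = C ((-1) ^ b) := by simp
  rw [h, coeff_C_mul, coeff_zero_X_sub_one_pow, h', coeff_mul_C, coeff_one_X_sub_one_pow]
  ring

/-- The coefficient of `y` in `(x - 1)^a (y - 1)^b`. -/
theorem coeff_y_term (a b : ℕ) :
    (((C X - 1 : ℤ[X][X]) ^ a * (X - 1) ^ b).coeff 1).coeff 0 = -(b : ℤ) * (-1) ^ (a + b) := by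
  have h : (C X - 1 : ℤ[X][X]) ^ a = C ((X - 1) ^ a) := by simp
  rw [h, coeff_C_mul, coeff_one_X_sub_one_pow]
  simp [coeff_zero_eq_eval_zero]
  ring

/-- If `|E| ≥ 2`, then `t₁₀ = t₀₁` for the Tutte polynomial of a ranked set.
The Tutte polynomial is an element of `ℤ[x][y]`, where `x` is
`Polynomial.C Polynomial.X` and `y` is `Polynomial.X`, so the coefficient
`t i j` of `x^i y^j` is `(T.coeff j).coeff i`. -/
theorem tutte_t10_eq_t01 {E : Type*} [Fintype E] [DecidableEq E]
    (hE : 2 ≤ Fintype.card E)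
    (r : Finset E → ℕ)
    (hr : ∀ S : Finset E, r S ≤ min (r Finset.univ) S.card)
    (T : Polynomial (Polynomial ℤ))
    (hT : T = ∑ S : Finset E,
      (Polynomial.C Polynomial.X - 1) ^ (r Finset.univ - r S) *
        (Polynomial.X - 1) ^ (S.card - r S))
    (t : ℕ → ℕ → ℤ)
    (ht : ∀ i j, t i j = (T.coeff j).coeff i) :
    t 1 0 = t 0 1 := by
  rw [ht, ht, hT, ← sub_eq_zero]
  simp only [finsetSum_coeff, coeff_x_term, coeff_y_term]
  rw [← sum_sub_distrib]
  have key : ∀ S : Finset E,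
      -((r univ - r S : ℕ) : ℤ) * (-1) ^ (r univ - r S + (#S - r S)) -
        -((#S - r S : ℕ) : ℤ) * (-1) ^ (r univ - r S + (#S - r S)) =
      (-1) ^ r univ * (#S * (-1) ^ #S) - (-1) ^ r univ * r univ * (-1) ^ #S := by
    intro S
    -- The bound on `r S` makes the truncated subtractions genuine.
    obtain ⟨h₁, h₂⟩ := le_min_iff.mp (hr S)
    obtain ⟨a, ha⟩ := Nat.exists_eq_add_of_le h₁
    obtain ⟨b, hb⟩ := Nat.exists_eq_add_of_le h₂
    rw [ha, hb, Nat.add_sub_cancel_left, Nat.add_sub_cancel_left]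
    have hs : (-1 : ℤ) ^ r S * (-1) ^ r S = 1 := by
      rw [← mul_pow]; simp
    push_cast
    simp only [pow_add]
    linear_combination ((a - b : ℤ) * (-1) ^ a * (-1) ^ b) * hs
  rw [sum_congr rfl fun S _ => key S, sum_sub_distrib, ← mul_sum, ← mul_sum,
    sum_neg_one_pow_card hE, sum_card_mul_neg_one_pow_card hE]
  simp
end
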